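/- Let Q₂(2k) denote the number of Goldbach partitions of the even integer 2k. For every fixed u with 0 < u < 1, the ratio (Σ_{2<k≤un} Q₂(2k)) / (Σ_{2<k≤n} Q₂(2k)) tends to u² as n → ∞. Equivalently, if 2Gₙ is the even number chosen by a uniformly random Goldbach partition of an even integer in (4, 2n], then Gₙ/n converges weakly to the maximum of two independent uniform-(0,1) random variables. -/

import Mathlib

open Filter Topology Asymptotics MeasureTheory

/-- `Q2 k` is the number of Goldbach partitions of `2*k`, i.e. the number of
unordered pairs `{p, q}` of odd primes with `p + q = 2*k`. -/
def Q2 (k : ℕ) : ℕ :=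
  ((Finset.range (2 * k + 1) ×ˢ Finset.range (2 * k + 1)).filter
    (fun pq => pq.1.Prime ∧ pq.2.Prime ∧ Odd pq.1 ∧ Odd pq.2 ∧
      pq.1 ≤ pq.2 ∧ pq.1 + pq.2 = 2 * k)).card

/-- `fOdd z = Σ_{p odd prime} z^p`. -/
noncomputable def fOdd (z : ℝ) : ℝ := ∑' p : ℕ, if p.Prime ∧ Odd p then z ^ p else 0

/-- `fOdd' z = Σ_{p odd prime} p * z^(p-1)`, the derivative of `fOdd` on `(0,1)`. -/
noncomputable def fOdd' (z : ℝ) : ℝ :=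
  ∑' p : ℕ, if p.Prime ∧ Odd p then (p : ℝ) * z ^ (p - 1) else 0

/-- `fOdd'' z = Σ_{p odd prime} p * (p-1) * z^(p-2)`, the second derivative of `fOdd` on `(0,1)`. -/
noncomputable def fOdd'' (z : ℝ) : ℝ :=
  ∑' p : ℕ, if p.Prime ∧ Odd p then (p : ℝ) * ((p : ℝ) - 1) * z ^ (p - 2) else 0

/-- The prime-counting function at a real argument: the number of primes `≤ y`. -/
noncomputable def primePi (y : ℝ) : ℕ := Nat.primeCounting ⌊y⌋₊

/-!
The sums `∑ Q₂(2k)` over `2 < k ≤ n` are asymptotic to `(n / log n)²`, so replacing `n` by `un`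
multiplies them by `u²`. Counting Goldbach partitions of all even numbers up to `2n` amounts to
counting ordered pairs of odd primes `p + q ≤ 2n`, twice up to the diagonal. Fixing `p` and using
`π(x) ~ x / log x` for `q ≤ 2n - p` turns this count into a Riemann sum for `∫₀¹ (1 - t) dt = 1/2`,
so no information on individual even numbers is needed.

The prime number theorem comes from the Wiener–Ikehara method. If the Laplace transform of a bounded
`f` extends continuously to the imaginary axis, then by Parseval and the Riemann–Lebesgue lemma the
means of `f` against translates of a kernel with compactly supported Fourier transform tend to `0`.
Since `exp t * B t` is monotone for `B t = exp (-t) * ψ (exp t)`, a nonnegative kernel recovers the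
limit of `B` itself. The boundary continuity for `ψ` is the nonvanishing of `ζ` on `Re s = 1`.
-/

open scoped FourierTransform

/-! ### Laplace transforms on the boundary line -/

/-- `G` extends the Laplace transform of `f`, given by the integral on the open right half-plane,
continuously to the closed half-plane. This is the analytic input of the Wiener–Ikehara method. -/
structure IsLaplaceExtension (f : ℝ → ℂ) (G : ℂ → ℂ) : Prop where
  continuousOn : ContinuousOn G {z | 0 ≤ z.re}
  laplace_eq : ∀ z : ℂ, 0 < z.re → ∫ t in Set.Ioi (0 : ℝ), f t * Complex.exp (-z * t) = G z

lemma IsLaplaceExtension.comp_mul_left {f : ℝ → ℂ} {G : ℂ → ℂ} (h : IsLaplaceExtension f G)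
    {r : ℝ} (hr : 0 < r) :
    IsLaplaceExtension (fun t => f (r * t)) (fun z => (r⁻¹ : ℝ) * G ((r⁻¹ : ℝ) * z)) where
  continuousOn := by
    refine continuousOn_const.mul (h.continuousOn.comp (by fun_prop) fun z (hz : 0 ≤ z.re) => ?_)
    simpa only [Set.mem_ofPred_eq, Complex.re_ofReal_mul] using mul_nonneg (inv_nonneg.2 hr.le) hz
  laplace_eq z hz := by
    have hre : 0 < ((r⁻¹ : ℝ) * z).re := by
      simpa only [Complex.re_ofReal_mul] using mul_pos (inv_pos.2 hr) hz
    have hscale := integral_comp_mul_left_Ioi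
      (fun t : ℝ => f t * Complex.exp (-((r⁻¹ : ℝ) * z) * t)) 0 hr
    rw [mul_zero, h.laplace_eq _ hre, Complex.real_smul] at hscale
    rw [← hscale]
    refine integral_congr_ae (ae_of_all _ fun t => ?_)
    have hr' : (r : ℂ) ≠ 0 := Complex.ofReal_ne_zero.2 hr.ne'
    push_cast
    congr 2
    field_simp

lemma integrable_exp_neg_smul_indicator_Ioi {f : ℝ → ℂ} (hf : AEStronglyMeasurable f) {C : ℝ}
    (hC : ∀ t, ‖f t‖ ≤ C) {ε : ℝ} (hε : 0 < ε) :
    Integrable ((Set.Ioi 0).indicator fun t : ℝ => f t * Real.exp (-ε * t)) :=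
  (integrable_indicator_iff measurableSet_Ioi).2 <|
    (integrableOn_exp_mul_Ioi (neg_lt_zero.2 hε) 0).ofReal.bdd_mul hf.restrict (ae_of_all _ hC)

lemma IsLaplaceExtension.fourier_indicator_exp_neg {f : ℝ → ℂ} {G : ℂ → ℂ}
    (h : IsLaplaceExtension f G) {ε : ℝ} (hε : 0 < ε) (y : ℝ) :
    𝓕 ((Set.Ioi 0).indicator fun t : ℝ => f t * Real.exp (-ε * t)) y =
      G (ε + 2 * Real.pi * y * Complex.I) := by
  have hre : 0 < (ε + 2 * Real.pi * y * Complex.I : ℂ).re := by simpa using hε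
  rw [← h.laplace_eq _ hre, ← integral_indicator measurableSet_Ioi,
    Real.fourier_real_eq_integral_exp_smul]
  congr 1 with t
  by_cases ht : t ∈ Set.Ioi (0 : ℝ)
  · rw [Set.indicator_of_mem ht, Set.indicator_of_mem ht, smul_eq_mul, mul_left_comm,
      Complex.ofReal_exp, ← Complex.exp_add]
    push_cast
    ring_nf
  · rw [Set.indicator_of_notMem ht, Set.indicator_of_notMem ht, smul_zero]

lemma IsLaplaceExtension.integral_mul_fourier_of_pos {f : ℝ → ℂ} {G : ℂ → ℂ}
    (h : IsLaplaceExtension f G) (hf : AEStronglyMeasurable f) {C : ℝ} (hC : ∀ t, ‖f t‖ ≤ C)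
    {φ : ℝ → ℂ} (hφ : Integrable φ) {ε : ℝ} (hε : 0 < ε) :
    ∫ t in Set.Ioi 0, f t * Real.exp (-ε * t) * 𝓕 φ t =
      ∫ y : ℝ, G (ε + 2 * Real.pi * y * Complex.I) * φ y := by
  have hflip := VectorFourier.integral_fourierIntegral_smul_eq_flip (L := innerₗ ℝ)
    Real.continuous_fourierChar continuous_inner
    (integrable_exp_neg_smul_indicator_Ioi hf hC hε) hφ
  simp only [flip_innerₗ] at hflip
  rw [← integral_indicator measurableSet_Ioi]
  calc _ = ∫ t, (Set.Ioi 0).indicator (fun t : ℝ => f t * Real.exp (-ε * t)) t * 𝓕 φ t := by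
        simp only [Set.indicator_mul_left]
    _ = ∫ y, 𝓕 ((Set.Ioi 0).indicator fun t : ℝ => f t * Real.exp (-ε * t)) y * φ y := hflip.symm
    _ = _ := by simp only [h.fourier_indicator_exp_neg hε]

lemma exists_norm_le_of_continuousOn_re_nonneg {G : ℂ → ℂ}
    (hG : ContinuousOn G {z | 0 ≤ z.re}) {φ : ℝ → ℂ} (hφ : HasCompactSupport φ) :
    ∃ M, ∀ ε ∈ Set.Icc (0 : ℝ) 1, ∀ y : ℝ, y ∈ tsupport φ →
      ‖G (ε + 2 * Real.pi * y * Complex.I)‖ ≤ M := by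
  have hcont : ContinuousOn (fun p : ℝ × ℝ => G (p.1 + 2 * Real.pi * p.2 * Complex.I))
      (Set.Icc 0 1 ×ˢ tsupport φ) :=
    hG.comp (by fun_prop) fun p hp => by simpa using hp.1.1
  obtain ⟨M, hM⟩ := (isCompact_Icc.prod hφ.isCompact).exists_bound_of_continuousOn hcont
  exact ⟨M, fun ε hε y hy => hM (ε, y) ⟨hε, hy⟩⟩

lemma tendsto_integral_boundary {G : ℂ → ℂ}
    (hG : ContinuousOn G {z | 0 ≤ z.re}) {φ : ℝ → ℂ} (hφ : Integrable φ)
    (hφs : HasCompactSupport φ) :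
    Tendsto (fun ε : ℝ => ∫ y : ℝ, G (ε + 2 * Real.pi * y * Complex.I) * φ y) (𝓝[>] 0)
      (𝓝 (∫ y : ℝ, G (2 * Real.pi * y * Complex.I) * φ y)) := by
  obtain ⟨M, hM⟩ := exists_norm_le_of_continuousOn_re_nonneg hG hφs
  refine tendsto_integral_filter_of_dominated_convergence (fun y => M * ‖φ y‖) ?_ ?_
    (hφ.norm.const_mul M) (ae_of_all _ fun y => ?_)
  · filter_upwards [self_mem_nhdsWithin] with ε hε
    have hcont : Continuous fun y : ℝ => G (ε + 2 * Real.pi * y * Complex.I) :=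
      hG.comp_continuous (by fun_prop) fun y => by simpa using (Set.mem_Ioi.1 hε).le
    exact hcont.aestronglyMeasurable.mul hφ.aestronglyMeasurable
  · filter_upwards [Ioc_mem_nhdsGT one_pos] with ε hε
    refine ae_of_all _ fun y => ?_
    by_cases hy : y ∈ tsupport φ
    · rw [norm_mul]
      exact mul_le_mul_of_nonneg_right (hM ε ⟨hε.1.le, hε.2⟩ y hy) (norm_nonneg _)
    · simp only [image_eq_zero_of_notMem_tsupport hy, mul_zero, norm_zero, le_refl]
  · have hpath : Tendsto (fun ε : ℝ => (ε + 2 * Real.pi * y * Complex.I : ℂ)) (𝓝[>] 0)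
        (𝓝[{z | 0 ≤ z.re}] (2 * Real.pi * y * Complex.I)) := by
      refine tendsto_nhdsWithin_iff.2 ⟨?_, ?_⟩
      · have : Continuous fun ε : ℝ => (ε + 2 * Real.pi * y * Complex.I : ℂ) := by fun_prop
        simpa using (this.tendsto 0).mono_left nhdsWithin_le_nhds
      · filter_upwards [self_mem_nhdsWithin] with ε hε
        simpa using (Set.mem_Ioi.1 hε).le
    exact ((hG _ (by simp)).tendsto.comp hpath).mul_const _

theorem IsLaplaceExtension.integral_mul_fourier {f : ℝ → ℂ} {G : ℂ → ℂ}
    (h : IsLaplaceExtension f G) (hf : AEStronglyMeasurable f) {C : ℝ} (hC : ∀ t, ‖f t‖ ≤ C)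
    {φ : ℝ → ℂ} (hφ : Integrable φ) (hφs : HasCompactSupport φ) (hφF : Integrable (𝓕 φ)) :
    ∫ t in Set.Ioi 0, f t * 𝓕 φ t = ∫ y : ℝ, G (2 * Real.pi * y * Complex.I) * φ y := by
  have hlim : Tendsto (fun ε : ℝ => ∫ t in Set.Ioi 0, f t * Real.exp (-ε * t) * 𝓕 φ t) (𝓝[>] 0)
      (𝓝 (∫ t in Set.Ioi 0, f t * 𝓕 φ t)) := by
    refine tendsto_integral_filter_of_dominated_convergence (fun t => C * ‖𝓕 φ t‖) ?_ ?_
      (hφF.norm.const_mul C).integrableOn (ae_of_all _ fun t => ?_)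
    · exact Eventually.of_forall fun ε => (hf.restrict.mul
        (by fun_prop : Measurable fun t : ℝ => (Real.exp (-ε * t) : ℂ)).aestronglyMeasurable).mul
        hφF.aestronglyMeasurable.restrict
    · filter_upwards [self_mem_nhdsWithin] with ε (hε : 0 < ε)
      filter_upwards [ae_restrict_mem measurableSet_Ioi] with t (ht : 0 < t)
      have hexp : ‖(Real.exp (-ε * t) : ℂ)‖ ≤ 1 := by
        rw [Complex.norm_real, Real.norm_of_nonneg (Real.exp_nonneg _), Real.exp_le_one_iff]
        nlinarith
      rw [norm_mul, norm_mul]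
      exact mul_le_mul_of_nonneg_right
        ((mul_le_of_le_one_right (norm_nonneg _) hexp).trans (hC t)) (norm_nonneg _)
    · have : Continuous fun ε : ℝ => f t * (Real.exp (-ε * t) : ℂ) * 𝓕 φ t := by fun_prop
      simpa using (this.tendsto 0).mono_left nhdsWithin_le_nhds
  refine tendsto_nhds_unique hlim ((tendsto_integral_boundary h.continuousOn hφ hφs).congr' ?_)
  filter_upwards [self_mem_nhdsWithin] with ε hε
  exact (h.integral_mul_fourier_of_pos hf hC hφ hε).symm

lemma fourier_fourierChar_smul (φ : ℝ → ℂ) (T t : ℝ) :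
    𝓕 (fun y => Real.fourierChar (y * T) • φ y) t = 𝓕 φ (t - T) := by
  simp only [Real.fourier_real_eq, smul_smul, ← AddChar.map_add_eq_mul]
  congr! 4
  ring

-- Translating `𝓕 φ` modulates `φ`, so after Parseval this is the Riemann–Lebesgue lemma.
theorem IsLaplaceExtension.tendsto_integral_mul_fourier_sub {f : ℝ → ℂ} {G : ℂ → ℂ}
    (h : IsLaplaceExtension f G) (hf : AEStronglyMeasurable f) {C : ℝ} (hC : ∀ t, ‖f t‖ ≤ C)
    {φ : ℝ → ℂ} (hφ : Integrable φ) (hφs : HasCompactSupport φ) (hφF : Integrable (𝓕 φ)) :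
    Tendsto (fun T : ℝ => ∫ t in Set.Ioi 0, f t * 𝓕 φ (t - T)) atTop (𝓝 0) := by
  have hRL := (Real.tendsto_integral_exp_smul_cocompact
    fun y : ℝ => G (2 * Real.pi * y * Complex.I) * φ y).comp
      (tendsto_neg_atTop_atBot.mono_right atBot_le_cocompact)
  refine hRL.congr fun T => ?_
  have hmod : Continuous fun y : ℝ => (Real.fourierChar (y * T) : ℂ) := by fun_prop
  have hparseval := h.integral_mul_fourier hf hC
    (φ := fun y => Real.fourierChar (y * T) • φ y)
    (hφ.bdd_mul (c := 1) hmod.aestronglyMeasurable (ae_of_all _ fun y => (Circle.norm_coe _).le))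
    (hφs.mul_left (f := fun y : ℝ => (Real.fourierChar (y * T) : ℂ)))
    (by simpa only [funext (fourier_fourierChar_smul φ T)] using hφF.comp_sub_right T)
  simp only [fourier_fourierChar_smul] at hparseval
  rw [hparseval]
  simp only [Function.comp_apply, mul_neg, neg_neg, mul_smul_comm]

/-! ### A Tauberian theorem for kernel means -/

lemma exists_integrable_sq_fourier :
    ∃ (ψ : ℝ → ℂ) (g : ℝ → ℝ), Integrable ψ ∧ HasCompactSupport ψ ∧ Continuous g ∧ g 0 ≠ 0 ∧
      Integrable (fun v => g v ^ 2) ∧ ∀ v, 𝓕 ψ v = g v := by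
  let b : ContDiffBump (0 : ℝ) := default
  have hsupp : HasCompactSupport fun y => (b y : ℂ) :=
    b.hasCompactSupport.comp_left (g := Complex.ofReal) Complex.ofReal_zero
  have hsmooth : ContDiff ℝ (⊤ : ℕ∞) fun y => (b y : ℂ) :=
    Complex.ofRealCLM.contDiff.comp b.contDiff
  let Ψ : SchwartzMap ℝ ℂ := hsupp.toSchwartzMap hsmooth
  have hfourier (v : ℝ) : 𝓕 Ψ v = ∫ y, Real.fourierChar (-(y * v)) • (b y : ℂ) := by
    rw [SchwartzMap.fourier_coe, Real.fourier_real_eq]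
    rfl
  have hreal (v : ℝ) : 𝓕 Ψ v = ((𝓕 Ψ v).re : ℂ) := by
    refine (Complex.conj_eq_iff_re.1 ?_).symm
    rw [hfourier, ← integral_conj, ← integral_neg_eq_self]
    refine integral_congr_ae (ae_of_all _ fun y => ?_)
    simp only [Circle.smul_def, smul_eq_mul, map_mul, Complex.conj_ofReal, b.neg,
      ← Circle.coe_inv_eq_conj, ← AddChar.map_neg_eq_inv, neg_mul, neg_neg]
  refine ⟨Ψ, fun v => (𝓕 Ψ v).re, Ψ.integrable, hsupp,
    Complex.continuous_re.comp (𝓕 Ψ).continuous, ?_, ((𝓕 Ψ).memLp 2).re.integrable_sq, hreal⟩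
  have hzero : 𝓕 Ψ 0 = ((∫ y, b y : ℝ) : ℂ) := by
    rw [hfourier, ← integral_complex_ofReal]
    simp only [mul_zero, neg_zero, AddChar.map_zero_eq_one, one_smul]
  simp only [hzero, Complex.ofReal_re]
  exact b.integral_pos.ne'

-- The Fourier transform of `ψ ⋆ ψ` is the square of a real function, hence nonnegative.
theorem exists_nonneg_fourier_kernel :
    ∃ (φ : ℝ → ℂ) (k : ℝ → ℝ), Integrable φ ∧ HasCompactSupport φ ∧ (∀ v, 0 ≤ k v) ∧
      Integrable k ∧ 0 < ∫ v, k v ∧ ∀ v, 𝓕 φ v = k v := by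
  obtain ⟨ψ, g, hψ, hψs, hg, hg0, hgi, hFg⟩ := exists_integrable_sq_fourier
  refine ⟨MeasureTheory.convolution ψ ψ (ContinuousLinearMap.mul ℂ ℂ), fun v => g v ^ 2,
    hψ.integrable_convolution _ hψ, hψs.convolution _ hψs, fun v => sq_nonneg _, hgi,
    integral_pos_of_integrable_nonneg_nonzero (x := 0) (hg.pow 2) hgi (fun v => sq_nonneg _)
      (pow_ne_zero 2 hg0), fun v => ?_⟩
  rw [Real.fourier_mul_convolution_eq hψ hψ, hFg, Complex.ofReal_pow, sq]

/-- The integral of `B` against the kernel `k` recentred at `T`. -/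
noncomputable def kernelMean (k B : ℝ → ℝ) (T : ℝ) : ℝ := ∫ w, B (T + w) * k w

section KernelMean

variable {k B : ℝ → ℝ} {C a : ℝ}

lemma integrable_comp_add_left_mul (hk : Integrable k) (hB : Measurable B) (hC : ∀ t, |B t| ≤ C)
    (T : ℝ) : Integrable fun w => B (T + w) * k w :=
  hk.bdd_mul (c := C) (hB.comp (measurable_const_add T)).aestronglyMeasurable
    (ae_of_all _ fun _ => hC _)

lemma kernelMean_sub_const (hk : Integrable k) (hB : Measurable B) (hC : ∀ t, |B t| ≤ C)
    (a T : ℝ) : kernelMean k (fun t => B t - a) T = kernelMean k B T - a * ∫ w, k w := by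
  simp only [kernelMean, sub_mul]
  rw [integral_sub (integrable_comp_add_left_mul hk hB hC T) (hk.const_mul a), integral_const_mul]

lemma tendsto_setIntegral_Iic_mul_comp_sub (hk : Integrable k) (hB : Measurable B)
    (hC : ∀ t, |B t| ≤ C) :
    Tendsto (fun T : ℝ => ∫ t in Set.Iic 0, B t * k (t - T)) atTop (𝓝 0) := by
  have htranslate (T : ℝ) : ∫ t in Set.Iic 0, B t * k (t - T) =
      ∫ w, (Set.Iic (-T)).indicator (fun w => B (T + w) * k w) w := by
    rw [← integral_indicator measurableSet_Iic, ← integral_add_right_eq_self _ T]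
    refine integral_congr_ae (ae_of_all _ fun w => ?_)
    simp only [Set.indicator_apply, Set.mem_Iic, add_sub_cancel_right, add_comm T,
      ← le_neg_iff_add_nonpos_right]
  simp only [htranslate]
  rw [← integral_zero ℝ ℝ]
  refine tendsto_integral_filter_of_dominated_convergence (fun w => C * |k w|) ?_ ?_
    (hk.abs.const_mul C) (ae_of_all _ fun w => ?_)
  · exact Eventually.of_forall fun T =>
      (integrable_comp_add_left_mul hk hB hC T).aestronglyMeasurable.indicator measurableSet_Iic
  · refine Eventually.of_forall fun T => ae_of_all _ fun w =>
      (norm_indicator_le_norm_self _ _).trans ?_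
    rw [Real.norm_eq_abs, abs_mul]
    exact mul_le_mul_of_nonneg_right (hC _) (abs_nonneg _)
  · refine tendsto_const_nhds.congr' ?_
    filter_upwards [eventually_gt_atTop (-w)] with T hT
    exact (Set.indicator_of_notMem (by simpa using neg_lt.1 hT) _).symm

lemma IsLaplaceExtension.tendsto_kernelMean {G : ℂ → ℂ}
    (h : IsLaplaceExtension (fun t => (B t : ℂ)) G) (hB : Measurable B) (hC : ∀ t, |B t| ≤ C)
    {φ : ℝ → ℂ} (hφ : Integrable φ) (hφs : HasCompactSupport φ) (hk : Integrable k)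
    (hφk : ∀ v, 𝓕 φ v = k v) :
    Tendsto (kernelMean k B) atTop (𝓝 0) := by
  have hpos := h.tendsto_integral_mul_fourier_sub hB.complex_ofReal.aestronglyMeasurable
    (fun t => by simpa using hC t) hφ hφs ((funext hφk : 𝓕 φ = _) ▸ hk.ofReal)
  simp only [hφk, ← Complex.ofReal_mul, integral_complex_ofReal] at hpos
  have hsum := ((Complex.continuous_re.tendsto 0).comp hpos).add
    (tendsto_setIntegral_Iic_mul_comp_sub hk hB hC)
  rw [Complex.zero_re, add_zero] at hsum
  refine hsum.congr fun T => ?_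
  have hint : Integrable fun t => B t * k (t - T) :=
    (hk.comp_sub_right T).bdd_mul (c := C) hB.aestronglyMeasurable (ae_of_all _ fun _ => hC _)
  rw [Function.comp_apply, Complex.ofReal_re, ← Set.compl_Ioi,
    integral_add_compl measurableSet_Ioi hint, ← integral_add_left_eq_self _ T]
  simp only [add_sub_cancel_left, kernelMean]

lemma le_exp_mul_of_monotone_exp_mul (hB0 : ∀ t, 0 ≤ B t) {lam d s t : ℝ}
    (hmono : Monotone fun t => Real.exp (lam * t) * B t) (hst : s ≤ t) (hd : lam * (t - s) ≤ d) :
    B s ≤ Real.exp d * B t := by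
  refine le_of_mul_le_mul_left ((hmono hst).trans ?_) (Real.exp_pos (lam * s))
  rw [← mul_assoc, ← Real.exp_add]
  exact mul_le_mul_of_nonneg_right (Real.exp_le_exp.2 (by linarith)) (hB0 t)

lemma mul_intervalIntegral_le_kernelMean (hk0 : ∀ w, 0 ≤ k w) (hk : Integrable k)
    (hBm : Measurable B) (hB0 : ∀ t, 0 ≤ B t) (hC : ∀ t, |B t| ≤ C) {lam R : ℝ} (hlam : 0 ≤ lam)
    (hR : 0 ≤ R) (hmono : Monotone fun t => Real.exp (lam * t) * B t) (T : ℝ) :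
    Real.exp (-(2 * lam * R)) * B T * ∫ w in (-R)..R, k w ≤ kernelMean k B (T + R) := by
  rw [intervalIntegral.integral_of_le (neg_le_self hR), ← integral_const_mul]
  have hint := integrable_comp_add_left_mul hk hBm hC (T + R)
  refine (setIntegral_mono_on (hk.const_mul _).integrableOn hint.integrableOn measurableSet_Ioc
    fun w hw => mul_le_mul_of_nonneg_right ?_ (hk0 w)).trans
    (setIntegral_le_integral hint (ae_of_all _ fun w => mul_nonneg (hB0 _) (hk0 w)))
  rw [Real.exp_neg, inv_mul_le_iff₀ (Real.exp_pos _)]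
  exact le_exp_mul_of_monotone_exp_mul hB0 hmono (by linarith [hw.1]) (by nlinarith [hw.2])

lemma kernelMean_le_mul_intervalIntegral_add (hk0 : ∀ w, 0 ≤ k w) (hk : Integrable k)
    (hBm : Measurable B) (hB0 : ∀ t, 0 ≤ B t) (hC : ∀ t, |B t| ≤ C) {lam R : ℝ} (hlam : 0 ≤ lam)
    (hR : 0 ≤ R) (hmono : Monotone fun t => Real.exp (lam * t) * B t) (T : ℝ) :
    kernelMean k B (T - R) ≤ Real.exp (2 * lam * R) * B T * (∫ w in (-R)..R, k w) +
      C * ((∫ w, k w) - ∫ w in (-R)..R, k w) := by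
  have hint := integrable_comp_add_left_mul hk hBm hC (T - R)
  rw [intervalIntegral.integral_of_le (neg_le_self hR), ← setIntegral_compl measurableSet_Ioc hk,
    kernelMean, ← integral_add_compl (s := Set.Ioc (-R) R) measurableSet_Ioc hint,
    ← integral_const_mul, ← integral_const_mul]
  refine add_le_add
    (setIntegral_mono_on hint.integrableOn (hk.const_mul _).integrableOn measurableSet_Ioc
      fun w hw => mul_le_mul_of_nonneg_right ?_ (hk0 w))
    (setIntegral_mono hint.integrableOn (hk.const_mul C).integrableOn
      fun w => mul_le_mul_of_nonneg_right ((le_abs_self _).trans (hC _)) (hk0 w))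
  exact le_exp_mul_of_monotone_exp_mul hB0 hmono (by linarith [hw.2]) (by nlinarith [hw.1])

-- Dilating time by `r = m⁻²` with window `[-m, m]`: as `m → ∞` the window captures all the mass of
-- the kernel, while the loss `exp (2 * r * m)` in the comparison of `B` across it tends to `1`.
lemma tendsto_exp_const_mul_inv_sq_mul (c : ℝ) :
    Tendsto (fun m : ℝ => Real.exp (c * (m ^ 2)⁻¹ * m)) atTop (𝓝 1) := by
  have hzero : Tendsto (fun m : ℝ => c * m⁻¹) atTop (𝓝 (c * 0)) :=
    tendsto_inv_atTop_zero.const_mul c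
  rw [← Real.exp_zero, ← mul_zero c]
  refine (Real.continuous_exp.tendsto _).comp (hzero.congr' ?_)
  filter_upwards [eventually_ne_atTop 0] with m hm
  field_simp

lemma tendsto_integral_neg_self (hk : Integrable k) :
    Tendsto (fun m => ∫ w in (-m)..m, k w) atTop (𝓝 (∫ w, k w)) :=
  intervalIntegral_tendsto_integral hk tendsto_neg_atTop_atBot tendsto_id

lemma eventually_atTop_of_eventually_mul_left {p : ℝ → Prop} {r : ℝ} (hr : 0 < r)
    (h : ∀ᶠ T in atTop, p (r * T)) : ∀ᶠ T in atTop, p T := by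
  filter_upwards [(tendsto_id.const_mul_atTop (inv_pos.2 hr)).eventually h] with T hT
  simpa only [id, mul_inv_cancel_left₀ hr.ne'] using hT

lemma monotone_exp_mul_comp_mul_left (hmono : Monotone fun t => Real.exp t * B t) {r : ℝ}
    (hr : 0 ≤ r) : Monotone fun t => Real.exp (r * t) * B (r * t) :=
  hmono.comp (monotone_mul_left_of_nonneg hr)

lemma eventually_lt_of_tendsto_kernelMean (hk0 : ∀ w, 0 ≤ k w) (hk : Integrable k)
    (hkpos : 0 < ∫ w, k w) (hBm : Measurable B) (hB0 : ∀ t, 0 ≤ B t) (hC : ∀ t, |B t| ≤ C)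
    (hmono : Monotone fun t => Real.exp t * B t)
    (hlim : ∀ r, 0 < r → Tendsto (kernelMean k fun t => B (r * t)) atTop (𝓝 (a * ∫ w, k w)))
    {b : ℝ} (hab : a < b) : ∀ᶠ T in atTop, B T < b := by
  have hgap : ∀ᶠ m : ℝ in atTop, a * ∫ w, k w <
      Real.exp (-2 * (m ^ 2)⁻¹ * m) * b * ∫ w in (-m)..m, k w := by
    refine (((tendsto_exp_const_mul_inv_sq_mul (-2)).mul_const b).mul
      (tendsto_integral_neg_self hk)).eventually_const_lt ?_
    rw [one_mul]
    exact mul_lt_mul_of_pos_right hab hkpos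
  obtain ⟨m, hm, hJ, hlt⟩ := ((eventually_gt_atTop 0).and
    (((tendsto_integral_neg_self hk).eventually_const_lt hkpos).and hgap)).exists
  have hr : 0 < (m ^ 2)⁻¹ := by positivity
  refine eventually_atTop_of_eventually_mul_left hr ?_
  filter_upwards [((hlim _ hr).comp
    (tendsto_atTop_add_const_right _ m tendsto_id)).eventually_lt_const hlt] with T hT
  have hle := mul_intervalIntegral_le_kernelMean hk0 hk (hBm.comp (measurable_const_mul _))
    (fun t => hB0 _) (fun t => hC _) hr.le hm.le (monotone_exp_mul_comp_mul_left hmono hr.le) T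
  have hlt' := lt_of_mul_lt_mul_right (hle.trans_lt hT) hJ.le
  simp only [neg_mul] at hlt'
  exact lt_of_mul_lt_mul_left hlt' (Real.exp_nonneg _)

lemma eventually_gt_of_tendsto_kernelMean (hk0 : ∀ w, 0 ≤ k w) (hk : Integrable k)
    (hkpos : 0 < ∫ w, k w) (hBm : Measurable B) (hB0 : ∀ t, 0 ≤ B t) (hC : ∀ t, |B t| ≤ C)
    (hmono : Monotone fun t => Real.exp t * B t)
    (hlim : ∀ r, 0 < r → Tendsto (kernelMean k fun t => B (r * t)) atTop (𝓝 (a * ∫ w, k w)))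
    {b : ℝ} (hba : b < a) : ∀ᶠ T in atTop, b < B T := by
  have hgap : ∀ᶠ m : ℝ in atTop, Real.exp (2 * (m ^ 2)⁻¹ * m) * b * (∫ w in (-m)..m, k w) +
      C * ((∫ w, k w) - ∫ w in (-m)..m, k w) < a * ∫ w, k w := by
    have hJ := tendsto_integral_neg_self hk
    refine ((((tendsto_exp_const_mul_inv_sq_mul 2).mul_const b).mul hJ).add
      ((hJ.const_sub _).const_mul C)).eventually_lt_const ?_
    rw [one_mul, sub_self, mul_zero, add_zero]
    exact mul_lt_mul_of_pos_right hba hkpos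
  obtain ⟨m, hm, hJ, hlt⟩ := ((eventually_gt_atTop 0).and
    (((tendsto_integral_neg_self hk).eventually_const_lt hkpos).and hgap)).exists
  have hr : 0 < (m ^ 2)⁻¹ := by positivity
  refine eventually_atTop_of_eventually_mul_left hr ?_
  filter_upwards [((hlim _ hr).comp
    (tendsto_atTop_add_const_right _ (-m) tendsto_id)).eventually_const_lt hlt] with T hT
  have hle := kernelMean_le_mul_intervalIntegral_add hk0 hk (hBm.comp (measurable_const_mul _))
    (fun t => hB0 _) (fun t => hC _) hr.le hm.le (monotone_exp_mul_comp_mul_left hmono hr.le) T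
  have hlt' := lt_of_mul_lt_mul_right (lt_of_add_lt_add_right (hT.trans_le hle)) hJ.le
  exact lt_of_mul_lt_mul_left hlt' (Real.exp_nonneg _)

theorem IsLaplaceExtension.tendsto_of_monotone_exp_mul {G : ℂ → ℂ}
    (h : IsLaplaceExtension (fun t => ((B t - a : ℝ) : ℂ)) G) (hB0 : ∀ t, 0 ≤ B t)
    (hC : ∀ t, |B t| ≤ C) (hmono : Monotone fun t => Real.exp t * B t) :
    Tendsto B atTop (𝓝 a) := by
  have hBm : Measurable B := by
    have hinv : B = fun t => (Real.exp t)⁻¹ * (Real.exp t * B t) :=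
      funext fun t => (inv_mul_cancel_left₀ (Real.exp_ne_zero t) (B t)).symm
    rw [hinv]
    exact Real.measurable_exp.inv.mul hmono.measurable
  obtain ⟨φ, k, hφ, hφs, hk0, hk, hkpos, hφk⟩ := exists_nonneg_fourier_kernel
  have hlim (r : ℝ) (hr : 0 < r) :
      Tendsto (kernelMean k fun t => B (r * t)) atTop (𝓝 (a * ∫ w, k w)) := by
    have hBr : Measurable fun t => B (r * t) := hBm.comp (measurable_const_mul r)
    have hcentred := (h.comp_mul_left hr).tendsto_kernelMean (B := fun t => B (r * t) - a)
      (hBr.sub_const a) (C := C + |a|)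
      (fun _ => (abs_sub _ _).trans (add_le_add_left (hC _) _)) hφ hφs hk hφk
    simpa only [kernelMean_sub_const hk hBr (fun _ => hC _), sub_add_cancel, zero_add]
      using hcentred.add_const (a * ∫ w, k w)
  exact tendsto_order.2
    ⟨fun b hb => eventually_gt_of_tendsto_kernelMean hk0 hk hkpos hBm hB0 hC hmono hlim hb,
      fun b hb => eventually_lt_of_tendsto_kernelMean hk0 hk hkpos hBm hB0 hC hmono hlim hb⟩

end KernelMean

/-! ### The Wiener–Ikehara theorem and the prime number theorem -/

/-- The summatory function `x ↦ ∑ c k` over the integers `1 ≤ k ≤ x`. -/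
noncomputable def summatory (c : ℕ → ℝ) (x : ℝ) : ℝ := ∑ k ∈ Finset.Icc 1 ⌊x⌋₊, c k

section WienerIkehara

variable {c : ℕ → ℝ}

lemma summatory_nonneg (hc : ∀ n, 0 ≤ c n) (x : ℝ) : 0 ≤ summatory c x :=
  Finset.sum_nonneg fun k _ => hc k

lemma summatory_mono (hc : ∀ n, 0 ≤ c n) : Monotone (summatory c) := fun _ _ hxy =>
  Finset.sum_le_sum_of_subset_of_nonneg (Finset.Icc_subset_Icc_right (Nat.floor_mono hxy))
    fun k _ _ => hc k

lemma exists_summatory_le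
    (hO : (fun n => ∑ k ∈ Finset.Icc 1 n, c k) =O[atTop] fun n : ℕ => (n : ℝ)) :
    ∃ C, ∀ x, 0 ≤ x → summatory c x ≤ C * x := by
  obtain ⟨C, hC⟩ := (isBigO_nat_atTop_iff fun n hn => by
    rw [Nat.cast_eq_zero.1 hn, Finset.Icc_eq_empty (by simp), Finset.sum_empty]).1 hO
  have hC' : 0 ≤ C := by simpa using (norm_nonneg _).trans (hC 1)
  refine ⟨C, fun x hx => (Real.le_norm_self _).trans ((hC ⌊x⌋₊).trans ?_)⟩
  rw [RCLike.norm_natCast]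
  exact mul_le_mul_of_nonneg_left (Nat.floor_le hx) hC'

lemma exists_abs_summatory_exp_mul_exp_neg_le (hc : ∀ n, 0 ≤ c n)
    (hO : (fun n => ∑ k ∈ Finset.Icc 1 n, c k) =O[atTop] fun n : ℕ => (n : ℝ)) :
    ∃ C, ∀ t, |summatory c (Real.exp t) * Real.exp (-t)| ≤ C := by
  obtain ⟨C, hC⟩ := exists_summatory_le hO
  refine ⟨C, fun t => ?_⟩
  rw [abs_of_nonneg (mul_nonneg (summatory_nonneg hc _) (Real.exp_nonneg _)), Real.exp_neg,
    ← div_eq_mul_inv, div_le_iff₀ (Real.exp_pos t)]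
  exact hC _ (Real.exp_nonneg t)

lemma one_add_ne_zero_of_re_nonneg {z : ℂ} (hz : 0 ≤ z.re) : 1 + z ≠ 0 :=
  Complex.ne_zero_of_re_pos (by simpa using add_pos_of_pos_of_nonneg one_pos hz)

lemma setIntegral_Ioi_comp_exp (g : ℝ → ℂ) :
    ∫ t in Set.Ioi (0 : ℝ), (Real.exp t : ℂ) * g (Real.exp t) = ∫ x in Set.Ioi (1 : ℝ), g x := by
  have hsubst := integral_image_eq_integral_abs_deriv_smul (s := Set.Ioi (0 : ℝ))
    measurableSet_Ioi (fun x _ => (Real.hasDerivAt_exp x).hasDerivWithinAt)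
    Real.exp_injective.injOn g
  rw [Real.image_exp_Ioi, Real.exp_zero] at hsubst
  simp only [hsubst, Real.abs_exp, Complex.real_smul]

lemma laplace_summatory_exp (hc : ∀ n, 0 ≤ c n)
    (hO : (fun n => ∑ k ∈ Finset.Icc 1 n, c k) =O[atTop] fun n : ℕ => (n : ℝ))
    {z : ℂ} (hz : 0 < z.re) :
    ∫ t in Set.Ioi (0 : ℝ), ((summatory c (Real.exp t) * Real.exp (-t) : ℝ) : ℂ) *
      Complex.exp (-z * t) = LSeries (fun n => c n) (1 + z) / (1 + z) := by
  have hs : 1 < (1 + z).re := by simpa using hz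
  rw [LSeries_eq_mul_integral_of_nonneg c zero_le_one hs
    (by simpa only [Real.rpow_one] using hO) hc,
    mul_div_cancel_left₀ _ (one_add_ne_zero_of_re_nonneg hz.le), ← setIntegral_Ioi_comp_exp]
  refine integral_congr_ae (ae_of_all _ fun t => ?_)
  have hexp : (Real.exp (-t) : ℂ) * Complex.exp (-z * t) =
      Real.exp t * (Real.exp t : ℂ) ^ (-(1 + z + 1)) := by
    rw [Complex.cpow_def_of_ne_zero (Complex.ofReal_ne_zero.2 (Real.exp_ne_zero t)),
      ← Complex.ofReal_log (Real.exp_pos t).le, Real.log_exp, Complex.ofReal_exp,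
      Complex.ofReal_exp, ← Complex.exp_add, ← Complex.exp_add]
    push_cast
    ring_nf
  simp only [summatory, Complex.ofReal_mul, Complex.ofReal_sum, mul_assoc, hexp]
  ring

lemma isLaplaceExtension_summatory_exp (hc : ∀ n, 0 ≤ c n)
    (hO : (fun n => ∑ k ∈ Finset.Icc 1 n, c k) =O[atTop] fun n : ℕ => (n : ℝ))
    {a : ℝ} {F : ℂ → ℂ} (hF : ContinuousOn F {s | 1 ≤ s.re})
    (hFc : ∀ s : ℂ, 1 < s.re → F s = LSeries (fun n => c n) s - a / (s - 1)) :
    IsLaplaceExtension (fun t => ((summatory c (Real.exp t) * Real.exp (-t) - a : ℝ) : ℂ))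
      (fun z => (F (1 + z) - a) / (1 + z)) where
  continuousOn := by
    refine ((hF.comp (by fun_prop) fun z hz => ?_).sub continuousOn_const).div (by fun_prop)
      fun z hz => one_add_ne_zero_of_re_nonneg hz
    simpa using hz
  laplace_eq z hz := by
    obtain ⟨C, hC⟩ := exists_abs_summatory_exp_mul_exp_neg_le hc hO
    have hexp := integrableOn_exp_mul_complex_Ioi (show (-z).re < 0 by simpa using hz) 0
    have hmeas : Measurable fun t => summatory c (Real.exp t) * Real.exp (-t) :=
      ((summatory_mono hc).measurable.comp Real.measurable_exp).mul
        (Real.measurable_exp.comp measurable_neg)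
    have hint : IntegrableOn (fun t : ℝ => ((summatory c (Real.exp t) * Real.exp (-t) : ℝ) : ℂ) *
        Complex.exp (-z * t)) (Set.Ioi 0) :=
      Integrable.bdd_mul (c := C) hexp hmeas.complex_ofReal.aestronglyMeasurable
        (ae_of_all _ fun t => by simpa only [Complex.norm_real, Real.norm_eq_abs] using hC t)
    simp only [Complex.ofReal_sub, sub_mul]
    rw [integral_sub hint (hexp.const_mul _), integral_const_mul,
      integral_exp_mul_complex_Ioi (by simpa using hz), laplace_summatory_exp hc hO hz,
      hFc _ (by simpa using hz), add_sub_cancel_left]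
    have hz0 : z ≠ 0 := Complex.ne_zero_of_re_pos hz
    have hz1 : 1 + z ≠ 0 := one_add_ne_zero_of_re_nonneg hz.le
    simp only [Complex.ofReal_zero, mul_zero, Complex.exp_zero]
    field_simp
    ring

theorem tendsto_summatory_div_of_continuousOn (hc : ∀ n, 0 ≤ c n)
    (hO : (fun n => ∑ k ∈ Finset.Icc 1 n, c k) =O[atTop] fun n : ℕ => (n : ℝ))
    {a : ℝ} {F : ℂ → ℂ} (hF : ContinuousOn F {s | 1 ≤ s.re})
    (hFc : ∀ s : ℂ, 1 < s.re → F s = LSeries (fun n => c n) s - a / (s - 1)) :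
    Tendsto (fun x => summatory c x / x) atTop (𝓝 a) := by
  obtain ⟨C, hC⟩ := exists_abs_summatory_exp_mul_exp_neg_le hc hO
  have hlim := (isLaplaceExtension_summatory_exp hc hO hF hFc).tendsto_of_monotone_exp_mul
    (fun t => mul_nonneg (summatory_nonneg hc _) (Real.exp_nonneg _)) hC ?_
  · refine (hlim.comp Real.tendsto_log_atTop).congr' ?_
    filter_upwards [eventually_gt_atTop 0] with x hx
    simp only [Function.comp_apply, Real.exp_neg, Real.exp_log hx, div_eq_mul_inv]
  · have hcancel (t : ℝ) : Real.exp t * (summatory c (Real.exp t) * Real.exp (-t)) =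
        summatory c (Real.exp t) := by
      rw [mul_left_comm, ← Real.exp_add, add_neg_cancel, Real.exp_zero, mul_one]
    simp only [hcancel]
    exact (summatory_mono hc).comp Real.exp_monotone

end WienerIkehara

lemma summatory_vonMangoldt :
    summatory (fun n => ArithmeticFunction.vonMangoldt n) = Chebyshev.psi := by
  ext x
  rw [Chebyshev.psi, summatory, ← Finset.Icc_add_one_left_eq_Ioc, zero_add]

lemma sum_vonMangoldt_isBigO :
    (fun n => ∑ k ∈ Finset.Icc 1 n, ArithmeticFunction.vonMangoldt k) =O[atTop]
      fun n : ℕ => (n : ℝ) := by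
  refine IsBigO.of_bound (Real.log 4 + 4) (Eventually.of_forall fun n => ?_)
  have hpsi : ∑ k ∈ Finset.Icc 1 n, ArithmeticFunction.vonMangoldt k = Chebyshev.psi n := by
    rw [← summatory_vonMangoldt, summatory, Nat.floor_natCast]
  rw [hpsi, Real.norm_of_nonneg (Chebyshev.psi_nonneg _), RCLike.norm_natCast]
  exact Chebyshev.psi_le_const_mul_self n.cast_nonneg

lemma residueClass_one_zmod_one (n : ℕ) :
    ArithmeticFunction.vonMangoldt.residueClass (1 : ZMod 1) n =
      ArithmeticFunction.vonMangoldt n := by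
  rw [ArithmeticFunction.vonMangoldt.residueClass, Set.indicator_of_mem]
  exact Subsingleton.elim _ _

theorem psi_isEquivalent_id : Chebyshev.psi ~[atTop] id := by
  refine isEquivalent_of_tendsto_one ?_
  rw [← summatory_vonMangoldt]
  refine tendsto_summatory_div_of_continuousOn
    (fun n => ArithmeticFunction.vonMangoldt_nonneg) sum_vonMangoldt_isBigO
    (ArithmeticFunction.vonMangoldt.continuousOn_LFunctionResidueClassAux (1 : ZMod 1))
    fun s hs => ?_
  simpa only [residueClass_one_zmod_one, Nat.totient_one, Nat.cast_one, inv_one,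
    Complex.ofReal_one] using
    ArithmeticFunction.vonMangoldt.eqOn_LFunctionResidueClassAux (isUnit_one (M := ZMod 1)) hs

theorem theta_isEquivalent_id : Chebyshev.theta ~[atTop] id := by
  have hsqrt : Real.sqrt =o[atTop] (id : ℝ → ℝ) := by
    have hone : (fun _ => 1 : ℝ → ℝ) =o[atTop] Real.sqrt :=
      isLittleO_const_left_of_ne one_ne_zero |>.2
        (tendsto_norm_atTop_atTop.comp Real.tendsto_sqrt_atTop)
    refine ((isBigO_refl Real.sqrt atTop).mul_isLittleO hone).congr'
      (Eventually.of_forall fun x => mul_one _) ?_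
    filter_upwards [eventually_ge_atTop 0] with x hx using Real.mul_self_sqrt hx
  simpa only [sub_sub_cancel] using psi_isEquivalent_id.sub_isLittleO
    (Chebyshev.isBigO_psi_sub_theta_sqrt.trans_isLittleO hsqrt)

lemma div_log_sq_isLittleO_div_log :
    (fun x : ℝ => x / Real.log x ^ 2) =o[atTop] fun x => x / Real.log x := by
  have hinv : (fun x : ℝ => (Real.log x)⁻¹) =o[atTop] fun _ => (1 : ℝ) :=
    (isLittleO_one_iff ℝ).2 Real.tendsto_log_atTop.inv_tendsto_atTop
  refine ((isBigO_refl (fun x : ℝ => x / Real.log x) atTop).mul_isLittleO hinv).congr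
    (fun x => ?_) fun x => mul_one _
  rw [sq, ← div_div, ← div_eq_mul_inv]

theorem primePi_isEquivalent : (fun x => (primePi x : ℝ)) ~[atTop] fun x => x / Real.log x := by
  have hmain : (fun x => Chebyshev.theta x / Real.log x) ~[atTop] fun x => x / Real.log x :=
    theta_isEquivalent_id.div IsEquivalent.refl
  refine (hmain.add_isLittleO (Chebyshev.primeCounting_sub_theta_div_log_isBigO.trans_isLittleO
    div_log_sq_isLittleO_div_log)).congr_left (Eventually.of_forall fun x => ?_)
  exact add_sub_cancel _ _

/-! ### Counting pairs by their sum -/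

section PairCounting

open Classical in
/-- The elements of `S` that are at most `x`; the real argument lets it be dilated and shifted. -/
noncomputable def elementsUpTo (S : Set ℕ) (x : ℝ) : Finset ℕ :=
  (Finset.range (⌊x⌋₊ + 1)).filter fun n => n ∈ S ∧ (n : ℝ) ≤ x

/-- The ordered pairs of elements of `S` whose sum is at most `x`. -/
noncomputable def pairsUpTo (S : Set ℕ) (x : ℝ) : Finset (ℕ × ℕ) :=
  (elementsUpTo S x ×ˢ elementsUpTo S x).filter fun pq => (pq.1 + pq.2 : ℝ) ≤ x

variable {S : Set ℕ}

lemma mem_elementsUpTo {x : ℝ} {n : ℕ} : n ∈ elementsUpTo S x ↔ n ∈ S ∧ (n : ℝ) ≤ x := by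
  simp only [elementsUpTo, Finset.mem_filter, Finset.mem_range_succ_iff, and_iff_right_iff_imp]
  exact fun h => Nat.le_floor h.2

lemma mem_pairsUpTo {x : ℝ} {pq : ℕ × ℕ} :
    pq ∈ pairsUpTo S x ↔ pq.1 ∈ S ∧ pq.2 ∈ S ∧ (pq.1 + pq.2 : ℝ) ≤ x := by
  rw [pairsUpTo, Finset.mem_filter, Finset.mem_product, mem_elementsUpTo, mem_elementsUpTo]
  refine ⟨fun h => ⟨h.1.1.1, h.1.2.1, h.2⟩, fun h => ⟨⟨⟨h.1, ?_⟩, h.2.1, ?_⟩, h.2.2⟩⟩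
  · exact (le_add_of_nonneg_right pq.2.cast_nonneg).trans h.2.2
  · exact (le_add_of_nonneg_left pq.1.cast_nonneg).trans h.2.2

lemma elementsUpTo_mono : Monotone (elementsUpTo S) := fun _ _ hxy _ hn =>
  mem_elementsUpTo.2 ⟨(mem_elementsUpTo.1 hn).1, (mem_elementsUpTo.1 hn).2.trans hxy⟩

lemma card_pairsUpTo (S : Set ℕ) (x : ℝ) :
    (pairsUpTo S x).card = ∑ p ∈ elementsUpTo S x, (elementsUpTo S (x - p)).card := by
  rw [← Finset.card_sigma, ← Finset.card_map (Equiv.sigmaEquivProd ℕ ℕ).toEmbedding]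
  congr 1
  ext ⟨p, q⟩
  simp only [Finset.mem_map_equiv, Equiv.sigmaEquivProd_symm_apply, Finset.mem_sigma,
    mem_elementsUpTo, mem_pairsUpTo, le_sub_iff_add_le']
  refine ⟨fun h => ⟨⟨h.1, ?_⟩, h.2⟩, fun h => ⟨h.1.1, h.2⟩⟩
  exact (le_add_of_nonneg_right q.cast_nonneg).trans h.2.2

lemma cast_card_sdiff_elementsUpTo {a b : ℝ} (hab : a ≤ b) :
    ((elementsUpTo S b \ elementsUpTo S a).card : ℝ) =
      (elementsUpTo S b).card - (elementsUpTo S a).card := by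
  rw [Finset.card_sdiff_of_subset (elementsUpTo_mono hab),
    Nat.cast_sub (Finset.card_le_card (elementsUpTo_mono hab))]

lemma card_sub_card_mul_card_le {a b : ℝ} (hab : a ≤ b) (x : ℝ) :
    ((elementsUpTo S b).card - (elementsUpTo S a).card : ℝ) * (elementsUpTo S (x - b)).card ≤
      ∑ p ∈ elementsUpTo S b, ((elementsUpTo S (x - p)).card : ℝ) -
        ∑ p ∈ elementsUpTo S a, ((elementsUpTo S (x - p)).card : ℝ) := by
  rw [← cast_card_sdiff_elementsUpTo hab, ← nsmul_eq_mul,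
    ← Finset.sum_sdiff_eq_sub (elementsUpTo_mono hab)]
  refine Finset.card_nsmul_le_sum _ _ _ fun p hp => Nat.cast_le.2 (Finset.card_le_card ?_)
  have hpb := (mem_elementsUpTo.1 (Finset.mem_sdiff.1 hp).1).2
  exact elementsUpTo_mono (sub_le_sub_left hpb x)

lemma le_card_sub_card_mul_card {a b : ℝ} (hab : a ≤ b) (x : ℝ) :
    ∑ p ∈ elementsUpTo S b, ((elementsUpTo S (x - p)).card : ℝ) -
        ∑ p ∈ elementsUpTo S a, ((elementsUpTo S (x - p)).card : ℝ) ≤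
      ((elementsUpTo S b).card - (elementsUpTo S a).card : ℝ) * (elementsUpTo S (x - a)).card := by
  rw [← cast_card_sdiff_elementsUpTo hab, ← nsmul_eq_mul,
    ← Finset.sum_sdiff_eq_sub (elementsUpTo_mono hab)]
  refine Finset.sum_le_card_nsmul _ _ _ fun p hp => Nat.cast_le.2 (Finset.card_le_card ?_)
  obtain ⟨hpb, hpa⟩ := Finset.mem_sdiff.1 hp
  have hap : a ≤ p := le_of_not_ge fun h =>
    hpa (mem_elementsUpTo.2 ⟨(mem_elementsUpTo.1 hpb).1, h⟩)
  exact elementsUpTo_mono (sub_le_sub_left hap x)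

-- Riemann sums for `∫₀¹ (1 - t) dt`: cut the range `[0, x]` of the first element into `m` equal
-- parts and replace the first element by an endpoint of its part.
lemma sum_card_sub_card_mul_card_le_card_pairsUpTo {m : ℕ} (hm : m ≠ 0) {x : ℝ} (hx : 0 ≤ x) :
    ∑ i ∈ Finset.range m, ((elementsUpTo S (((i + 1 : ℕ) : ℝ) / m * x)).card -
        (elementsUpTo S (i / m * x)).card : ℝ) *
      (elementsUpTo S ((1 - ((i + 1 : ℕ) : ℝ) / m) * x)).card ≤ (pairsUpTo S x).card := by
  have hmono (i : ℕ) : (i / m * x : ℝ) ≤ ((i + 1 : ℕ) : ℝ) / m * x := by gcongr; simp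
  have htele := Finset.sum_le_sum fun i (_ : i ∈ Finset.range m) =>
    card_sub_card_mul_card_le (S := S) (hmono i) x
  rw [Finset.sum_range_sub (fun i : ℕ => ∑ p ∈ elementsUpTo S (i / m * x),
    ((elementsUpTo S (x - p)).card : ℝ)), div_self (Nat.cast_ne_zero.2 hm), one_mul] at htele
  simp only [one_sub_mul]
  rw [card_pairsUpTo]
  push_cast at htele ⊢
  exact htele.trans (sub_le_self _ (Finset.sum_nonneg fun _ _ => Nat.cast_nonneg _))

lemma card_pairsUpTo_le_sum_card_sub_card_mul_card {m : ℕ} (hm : m ≠ 0) {x : ℝ} (hx : 0 ≤ x) :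
    ((pairsUpTo S x).card : ℝ) ≤ (elementsUpTo S 0).card * (elementsUpTo S x).card +
      ∑ i ∈ Finset.range m, ((elementsUpTo S (((i + 1 : ℕ) : ℝ) / m * x)).card -
        (elementsUpTo S (i / m * x)).card : ℝ) * (elementsUpTo S ((1 - (i : ℝ) / m) * x)).card := by
  have hmono (i : ℕ) : (i / m * x : ℝ) ≤ ((i + 1 : ℕ) : ℝ) / m * x := by gcongr; simp
  have htele := Finset.sum_le_sum fun i (_ : i ∈ Finset.range m) =>
    le_card_sub_card_mul_card (S := S) (hmono i) x
  rw [Finset.sum_range_sub (fun i : ℕ => ∑ p ∈ elementsUpTo S (i / m * x),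
    ((elementsUpTo S (x - p)).card : ℝ)), div_self (Nat.cast_ne_zero.2 hm), one_mul,
    Nat.cast_zero, zero_div, zero_mul, sub_le_iff_le_add'] at htele
  have hfirst : ∑ p ∈ elementsUpTo S 0, ((elementsUpTo S (x - p)).card : ℝ) ≤
      (elementsUpTo S 0).card * (elementsUpTo S x).card := by
    rw [← nsmul_eq_mul]
    exact Finset.sum_le_card_nsmul _ _ _ fun p _ => Nat.cast_le.2 <|
      Finset.card_le_card (elementsUpTo_mono (sub_le_self x p.cast_nonneg))
  simp only [one_sub_mul]
  rw [card_pairsUpTo]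
  push_cast at htele ⊢
  exact htele.trans (add_le_add_left hfirst _)

lemma sum_range_inv_mul_one_sub_div {m : ℕ} (hm : m ≠ 0) :
    ∑ i ∈ Finset.range m, (m : ℝ)⁻¹ * (1 - i / m) = 1 / 2 + (m : ℝ)⁻¹ / 2 := by
  have hgauss : (∑ i ∈ Finset.range m, (i : ℝ)) * 2 = m * (m - 1) := by
    rw [← Nat.cast_sum, ← Nat.cast_pred (Nat.pos_of_ne_zero hm)]
    exact_mod_cast Finset.sum_range_id_mul_two m
  have hm' : (m : ℝ) ≠ 0 := Nat.cast_ne_zero.2 hm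
  rw [← Finset.mul_sum, Finset.sum_sub_distrib, ← Finset.sum_div, Finset.sum_const,
    Finset.card_range, nsmul_one]
  field_simp
  linarith

lemma sum_range_inv_mul_one_sub_succ_div {m : ℕ} (hm : m ≠ 0) :
    ∑ i ∈ Finset.range m, (m : ℝ)⁻¹ * (1 - ((i + 1 : ℕ) : ℝ) / m) = 1 / 2 - (m : ℝ)⁻¹ / 2 := by
  have hm' : (m : ℝ) ≠ 0 := Nat.cast_ne_zero.2 hm
  have hshift (i : ℕ) : (m : ℝ)⁻¹ * (1 - ((i + 1 : ℕ) : ℝ) / m) =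
      (m : ℝ)⁻¹ * (1 - i / m) - (m : ℝ)⁻¹ * (m : ℝ)⁻¹ := by
    push_cast
    ring
  simp only [hshift]
  rw [Finset.sum_sub_distrib, sum_range_inv_mul_one_sub_div hm, Finset.sum_const,
    Finset.card_range, nsmul_eq_mul, mul_inv_cancel_left₀ hm']
  ring

lemma tendsto_sum_card_sub_card_mul_card_div {w : ℝ → ℝ}
    (hS : ∀ c, 0 ≤ c → Tendsto (fun x => (elementsUpTo S (c * x)).card / w x) atTop (𝓝 c))
    (m : ℕ) {c : ℕ → ℝ} (hc : ∀ i < m, 0 ≤ c i) :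
    Tendsto (fun x => (∑ i ∈ Finset.range m, ((elementsUpTo S (((i + 1 : ℕ) : ℝ) / m * x)).card -
        (elementsUpTo S (i / m * x)).card : ℝ) * (elementsUpTo S (c i * x)).card) / w x ^ 2) atTop
      (𝓝 (∑ i ∈ Finset.range m, (m : ℝ)⁻¹ * c i)) := by
  have hlim := tendsto_finsetSum (Finset.range m) fun i hi =>
    ((hS _ (by positivity : 0 ≤ ((i + 1 : ℕ) : ℝ) / m)).sub
      (hS _ (by positivity : 0 ≤ (i : ℝ) / m))).mul (hS _ (hc i (Finset.mem_range.1 hi)))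
  have hstep (i : ℕ) : ((i + 1 : ℕ) : ℝ) / m - i / m = (m : ℝ)⁻¹ := by
    rw [← sub_div, Nat.cast_succ, add_sub_cancel_left, one_div]
  simp only [hstep] at hlim
  refine hlim.congr fun x => ?_
  simp only [← sub_div, div_mul_div_comm, ← sq, Finset.sum_div]

lemma tendsto_half_add_inv_natCast_mul (b : ℝ) :
    Tendsto (fun m : ℕ => 1 / 2 + (m : ℝ)⁻¹ * b) atTop (𝓝 (1 / 2)) := by
  simpa only [zero_mul, add_zero] using
    (tendsto_inv_atTop_nhds_zero_nat.mul_const b).const_add (1 / 2 : ℝ)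

lemma eventually_lt_card_pairsUpTo_div {w : ℝ → ℝ}
    (hS : ∀ c, 0 ≤ c → Tendsto (fun x => (elementsUpTo S (c * x)).card / w x) atTop (𝓝 c))
    {b : ℝ} (hb : b < 1 / 2) : ∀ᶠ x in atTop, b < (pairsUpTo S x).card / w x ^ 2 := by
  have hsmall : ∀ᶠ m : ℕ in atTop, b < 1 / 2 - (m : ℝ)⁻¹ / 2 := by
    filter_upwards [(tendsto_half_add_inv_natCast_mul (-1 / 2)).eventually_const_lt hb] with m hm
    linarith
  obtain ⟨m, hbm, hm⟩ := (hsmall.and (eventually_ne_atTop 0)).exists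
  have hlim := tendsto_sum_card_sub_card_mul_card_div hS m
    (c := fun i => 1 - ((i + 1 : ℕ) : ℝ) / m) fun i hi => sub_nonneg.2 <|
      div_le_one_of_le₀ (Nat.cast_le.2 hi) m.cast_nonneg
  rw [sum_range_inv_mul_one_sub_succ_div hm] at hlim
  filter_upwards [hlim.eventually_const_lt hbm, eventually_ge_atTop 0] with x hbx hx
  exact hbx.trans_le (div_le_div_of_nonneg_right
    (sum_card_sub_card_mul_card_le_card_pairsUpTo hm hx) (sq_nonneg _))

lemma eventually_card_pairsUpTo_div_lt {w : ℝ → ℝ}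
    (hS : ∀ c, 0 ≤ c → Tendsto (fun x => (elementsUpTo S (c * x)).card / w x) atTop (𝓝 c))
    {b : ℝ} (hb : 1 / 2 < b) : ∀ᶠ x in atTop, (pairsUpTo S x).card / w x ^ 2 < b := by
  have hsmall : ∀ᶠ m : ℕ in atTop, 1 / 2 + (m : ℝ)⁻¹ / 2 < b := by
    filter_upwards [(tendsto_half_add_inv_natCast_mul (1 / 2)).eventually_lt_const hb] with m hm
    linarith
  obtain ⟨m, hbm, hm⟩ := (hsmall.and (eventually_ne_atTop 0)).exists
  have hlim := ((hS 0 le_rfl).mul (hS 1 zero_le_one)).add <|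
    tendsto_sum_card_sub_card_mul_card_div hS m
      (c := fun i => 1 - (i : ℝ) / m) fun i hi => sub_nonneg.2 <|
        div_le_one_of_le₀ (Nat.cast_le.2 hi.le) m.cast_nonneg
  rw [sum_range_inv_mul_one_sub_div hm, zero_mul, zero_add] at hlim
  filter_upwards [hlim.eventually_lt_const hbm, eventually_ge_atTop 0] with x hbx hx
  rw [zero_mul, one_mul, div_mul_div_comm, ← sq, ← add_div] at hbx
  exact (div_le_div_of_nonneg_right
    (card_pairsUpTo_le_sum_card_sub_card_mul_card hm hx) (sq_nonneg _)).trans_lt hbx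

theorem tendsto_card_pairsUpTo_div_sq {w : ℝ → ℝ}
    (hS : ∀ c, 0 ≤ c → Tendsto (fun x => (elementsUpTo S (c * x)).card / w x) atTop (𝓝 c)) :
    Tendsto (fun x => (pairsUpTo S x).card / w x ^ 2) atTop (𝓝 (1 / 2)) :=
  tendsto_order.2 ⟨fun _ hb => eventually_lt_card_pairsUpTo_div hS hb,
    fun _ hb => eventually_card_pairsUpTo_div_lt hS hb⟩

lemma two_mul_card_filter_fst_le_snd {α : Type*} [LinearOrder α] {s : Finset (α × α)}
    (hs : ∀ p ∈ s, p.swap ∈ s) :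
    2 * (s.filter fun p => p.1 ≤ p.2).card = s.card + (s.filter fun p => p.1 = p.2).card := by
  have hswap : (s.filter fun p => p.2 ≤ p.1).card = (s.filter fun p => p.1 ≤ p.2).card :=
    Finset.card_nbij' Prod.swap Prod.swap
      (fun p hp => Finset.mem_filter.2 ((Finset.mem_filter.1 hp).imp_left (hs p)))
      (fun p hp => Finset.mem_filter.2 ((Finset.mem_filter.1 hp).imp_left (hs p)))
      (fun _ _ => Prod.swap_swap _) fun _ _ => Prod.swap_swap _
  have hunion := Finset.card_union_add_card_inter (s.filter fun p => p.1 ≤ p.2)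
    (s.filter fun p => p.2 ≤ p.1)
  rw [← Finset.filter_or, Finset.filter_true_of_mem fun p _ => le_total p.1 p.2,
    ← Finset.filter_and, hswap] at hunion
  simp only [← le_antisymm_iff] at hunion
  rw [hunion, two_mul]

lemma swap_mem_pairsUpTo {x : ℝ} {pq : ℕ × ℕ} (h : pq ∈ pairsUpTo S x) :
    pq.swap ∈ pairsUpTo S x := by
  obtain ⟨hp, hq, hpq⟩ := mem_pairsUpTo.1 h
  exact mem_pairsUpTo.2 ⟨hq, hp, (add_comm _ _).trans_le hpq⟩

lemma card_filter_fst_eq_snd_pairsUpTo_le (S : Set ℕ) (x : ℝ) :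
    ((pairsUpTo S x).filter fun pq => pq.1 = pq.2).card ≤ (elementsUpTo S x).card := by
  refine Finset.card_le_card_of_injOn Prod.fst (fun pq hpq => ?_) fun pq hpq rs hrs h => ?_
  · exact (Finset.mem_product.1 (Finset.mem_filter.1 (Finset.mem_filter.1 hpq).1).1).1
  · exact Prod.ext h ((Finset.mem_filter.1 hpq).2.symm.trans (h.trans (Finset.mem_filter.1 hrs).2))

theorem tendsto_card_filter_fst_le_snd_pairsUpTo_div_sq {w : ℝ → ℝ} (hw : Tendsto w atTop atTop)
    (hS : ∀ c, 0 ≤ c → Tendsto (fun x => (elementsUpTo S (c * x)).card / w x) atTop (𝓝 c)) :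
    Tendsto (fun x => ((pairsUpTo S x).filter fun pq => pq.1 ≤ pq.2).card / w x ^ 2) atTop
      (𝓝 (1 / 4)) := by
  have hdiag : Tendsto (fun x => ((pairsUpTo S x).filter fun pq => pq.1 = pq.2).card / w x ^ 2)
      atTop (𝓝 0) := by
    have hbound := (hS 1 zero_le_one).mul hw.inv_tendsto_atTop
    rw [mul_zero] at hbound
    refine squeeze_zero (fun x => by positivity) (fun x => ?_) hbound
    rw [one_mul, Pi.inv_apply, ← div_eq_mul_inv, div_div, ← sq]
    gcongr
    exact card_filter_fst_eq_snd_pairsUpTo_le S x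
  have hsum := ((tendsto_card_pairsUpTo_div_sq hS).add hdiag).div_const 2
  norm_num only at hsum
  refine hsum.congr fun x => ?_
  have htwo : 2 * (((pairsUpTo S x).filter fun pq => pq.1 ≤ pq.2).card : ℝ) =
      (pairsUpTo S x).card + ((pairsUpTo S x).filter fun pq => pq.1 = pq.2).card :=
    mod_cast two_mul_card_filter_fst_le_snd fun _ => swap_mem_pairsUpTo
  rw [← add_div, ← htwo, mul_div_assoc, mul_div_cancel_left₀ _ two_ne_zero]

end PairCounting

/-! ### Goldbach partitions -/

lemma isEquivalent_const_mul_iff_tendsto_div {ι : Type*} {l : Filter ι} {f g : ι → ℝ} {c : ℝ}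
    (hc : c ≠ 0) (hg : ∀ᶠ i in l, g i ≠ 0) :
    (f ~[l] fun i => c * g i) ↔ Tendsto (fun i => f i / g i) l (𝓝 c) := by
  rw [isEquivalent_iff_tendsto_one (hg.mono fun i hi => mul_ne_zero hc hi),
    ← tendsto_const_smul_iff₀ hc]
  simp only [Pi.div_apply, smul_eq_mul, mul_one, ← mul_div_assoc, mul_div_mul_left _ _ hc]

lemma div_log_isEquivalent {ι : Type*} {l : Filter ι} {f g : ι → ℝ} {c : ℝ} (hc : 0 < c)
    (hg : Tendsto g l atTop) (hfg : f ~[l] fun i => c * g i) :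
    (fun i => f i / Real.log (f i)) ~[l] fun i => c * (g i / Real.log (g i)) := by
  have hlogg : Tendsto (fun i => Real.log (g i)) l atTop := Real.tendsto_log_atTop.comp hg
  have hlog : (fun i => Real.log (f i)) ~[l] fun i => Real.log (g i) := by
    refine (hfg.log (hg.const_mul_atTop hc)).trans ?_
    have hconst : (fun _ => Real.log c) =o[l] fun i => Real.log (g i) :=
      isLittleO_const_left.2 (Or.inr (tendsto_norm_atTop_atTop.comp hlogg))
    refine (IsEquivalent.refl.add_isLittleO hconst).congr_left ?_
    filter_upwards [hg.eventually_gt_atTop 0] with i hi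
    rw [Real.log_mul hc.ne' hi.ne', add_comm, Pi.add_apply]
  exact (hfg.div hlog).congr_right (Eventually.of_forall fun i => mul_div_assoc _ _ _)

lemma tendsto_div_log_atTop : Tendsto (fun x => x / Real.log x) atTop atTop := by
  have hpos : ∀ᶠ x : ℝ in atTop, Real.log x / x ∈ Set.Ioi 0 := by
    filter_upwards [eventually_gt_atTop 1] with x hx
    exact div_pos (Real.log_pos hx) (one_pos.trans hx)
  have hzero := tendsto_nhdsWithin_iff.2
    ⟨Real.isLittleO_log_id_atTop.tendsto_div_nhds_zero, hpos⟩
  exact hzero.inv_tendsto_nhdsGT_zero.congr fun x => inv_div _ _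

lemma tendsto_comp_const_mul_div_of_isEquivalent_div_log {N : ℝ → ℝ}
    (hN : N ~[atTop] fun x => x / Real.log x) {c : ℝ} (hc : 0 ≤ c) :
    Tendsto (fun x => N (c * x) / (x / Real.log x)) atTop (𝓝 c) := by
  rcases hc.eq_or_lt with rfl | hc
  · simpa only [zero_mul] using tendsto_div_log_atTop.const_div_atTop (N 0)
  have hcx : Tendsto (fun x : ℝ => c * x) atTop atTop := tendsto_id.const_mul_atTop hc
  have hequiv : (fun x => N (c * x)) ~[atTop] fun x => c * (x / Real.log x) :=
    (hN.comp_tendsto hcx).trans (div_log_isEquivalent hc tendsto_id IsEquivalent.refl)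
  exact (isEquivalent_const_mul_iff_tendsto_div hc.ne'
    (tendsto_div_log_atTop.eventually_ne_atTop 0)).1 hequiv

/-- The primes entering Goldbach partitions. -/
def oddPrimes : Set ℕ := {p | p.Prime ∧ Odd p}

lemma card_elementsUpTo_oddPrimes_le_primePi (x : ℝ) :
    (elementsUpTo oddPrimes x).card ≤ primePi x := by
  rw [primePi, Nat.primeCounting, Nat.primeCounting', Nat.count_eq_card_filter_range]
  refine Finset.card_le_card fun p hp => ?_
  obtain ⟨hp, hpx⟩ := mem_elementsUpTo.1 hp
  exact Finset.mem_filter.2 ⟨Finset.mem_range_succ_iff.2 (Nat.le_floor hpx), hp.1⟩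

lemma primePi_le_card_elementsUpTo_oddPrimes_add_one {x : ℝ} (hx : 0 ≤ x) :
    primePi x ≤ (elementsUpTo oddPrimes x).card + 1 := by
  rw [primePi, Nat.primeCounting, Nat.primeCounting', Nat.count_eq_card_filter_range]
  refine (Finset.card_le_card (t := insert 2 (elementsUpTo oddPrimes x)) fun p hp => ?_).trans
    (Finset.card_insert_le _ _)
  obtain ⟨hpx, hp⟩ := Finset.mem_filter.1 hp
  refine Finset.mem_insert.2 (hp.eq_two_or_odd'.imp_right fun hodd => ?_)
  exact mem_elementsUpTo.2
    ⟨⟨hp, hodd⟩, (Nat.le_floor_iff hx).1 (Finset.mem_range_succ_iff.1 hpx)⟩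

lemma card_elementsUpTo_oddPrimes_isEquivalent :
    (fun x => ((elementsUpTo oddPrimes x).card : ℝ)) ~[atTop] fun x => x / Real.log x := by
  have hbound : (fun x => ((elementsUpTo oddPrimes x).card : ℝ) - primePi x) =O[atTop]
      fun _ => (1 : ℝ) := by
    refine IsBigO.of_bound 1 ?_
    filter_upwards [eventually_ge_atTop 0] with x hx
    have hle : ((elementsUpTo oddPrimes x).card : ℝ) ≤ primePi x :=
      mod_cast card_elementsUpTo_oddPrimes_le_primePi x
    have hge : (primePi x : ℝ) ≤ (elementsUpTo oddPrimes x).card + 1 :=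
      mod_cast primePi_le_card_elementsUpTo_oddPrimes_add_one hx
    rw [norm_one, one_mul, Real.norm_eq_abs, abs_le]
    constructor <;> linarith
  have hone : (fun _ => (1 : ℝ)) =o[atTop] fun x : ℝ => x / Real.log x :=
    isLittleO_const_left.2 (Or.inr (tendsto_norm_atTop_atTop.comp tendsto_div_log_atTop))
  refine (primePi_isEquivalent.add_isLittleO (hbound.trans_isLittleO hone)).congr_left
    (Eventually.of_forall fun x => ?_)
  exact add_sub_cancel _ _

lemma Q2_eq_card_filter_pairsUpTo {k n : ℕ} (hk : k ≤ n) :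
    Q2 k = (((pairsUpTo oddPrimes (2 * n)).filter fun pq => pq.1 ≤ pq.2).filter
      fun pq => (pq.1 + pq.2) / 2 = k).card := by
  rw [Q2]
  congr 1
  ext ⟨p, q⟩
  simp only [Finset.mem_filter, Finset.mem_product, Finset.mem_range, mem_pairsUpTo, oddPrimes,
    Set.mem_ofPred_eq]
  constructor
  · rintro ⟨-, hp, hq, hpodd, hqodd, hle, hsum⟩
    exact ⟨⟨⟨⟨hp, hpodd⟩, ⟨hq, hqodd⟩, mod_cast (by omega : p + q ≤ 2 * n)⟩, hle⟩, by omega⟩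
  · rintro ⟨⟨⟨⟨hp, hpodd⟩, ⟨hq, hqodd⟩, -⟩, hle⟩, hhalf⟩
    have hsum : p + q = 2 * k := by rw [← hhalf, Nat.two_mul_div_two_of_even (hpodd.add_odd hqodd)]
    exact ⟨by omega, hp, hq, hpodd, hqodd, hle, hsum⟩

lemma sum_Q2_eq_card_filter_pairsUpTo (n : ℕ) :
    ∑ k ∈ Finset.Icc 3 n, Q2 k =
      ((pairsUpTo oddPrimes (2 * n)).filter fun pq => pq.1 ≤ pq.2).card := by
  rw [Finset.card_eq_sum_card_fiberwise (f := fun pq => (pq.1 + pq.2) / 2) (t := Finset.Icc 3 n)]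
  · exact Finset.sum_congr rfl fun k hk => Q2_eq_card_filter_pairsUpTo (Finset.mem_Icc.1 hk).2
  · rintro ⟨p, q⟩ h
    obtain ⟨⟨hp, hpodd⟩, ⟨hq, hqodd⟩, hle⟩ := mem_pairsUpTo.1 (Finset.mem_filter.1 h).1
    have hsum : p + q ≤ 2 * n := mod_cast hle
    have hp3 : 3 ≤ p := hp.odd_iff.1 hpodd
    have hq3 : 3 ≤ q := hq.odd_iff.1 hqodd
    exact Finset.mem_coe.2 (Finset.mem_Icc.2 (by dsimp only; omega))

theorem sum_Q2_isEquivalent :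
    (fun n : ℕ => ∑ k ∈ Finset.Icc 3 n, (Q2 k : ℝ)) ~[atTop]
      fun n => ((n : ℝ) / Real.log n) ^ 2 := by
  have htwo : Tendsto (fun n : ℕ => 2 * (n : ℝ)) atTop atTop :=
    tendsto_natCast_atTop_atTop.const_mul_atTop two_pos
  have hratio := (tendsto_card_filter_fst_le_snd_pairsUpTo_div_sq tendsto_div_log_atTop
    fun c hc => tendsto_comp_const_mul_div_of_isEquivalent_div_log
      card_elementsUpTo_oddPrimes_isEquivalent hc).comp htwo
  have hcount : (fun n : ℕ => ∑ k ∈ Finset.Icc 3 n, (Q2 k : ℝ)) ~[atTop]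
      fun n => 1 / 4 * (2 * (n : ℝ) / Real.log (2 * n)) ^ 2 := by
    refine (isEquivalent_const_mul_iff_tendsto_div (by norm_num) ?_).2 (hratio.congr fun n => ?_)
    · exact ((tendsto_div_log_atTop.comp htwo).eventually_ne_atTop 0).mono
        fun n hn => pow_ne_zero 2 hn
    · rw [Function.comp_apply, ← sum_Q2_eq_card_filter_pairsUpTo, Nat.cast_sum]
  have hscale : (fun n : ℕ => 2 * (n : ℝ) / Real.log (2 * n)) ~[atTop]
      fun n => 2 * ((n : ℝ) / Real.log n) :=
    div_log_isEquivalent two_pos tendsto_natCast_atTop_atTop IsEquivalent.refl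
  refine (hcount.trans (IsEquivalent.refl.mul (hscale.pow 2))).congr_right
    (Eventually.of_forall fun n => ?_)
  simp only [Pi.mul_apply, Pi.pow_apply]
  ring

theorem goldbach_number_weak_limit_general (u : ℝ) (hu : 0 ≤ u) :
    Tendsto (fun n : ℕ =>
        (∑ k ∈ Finset.Icc 3 ⌊u * (n : ℝ)⌋₊, (Q2 k : ℝ)) /
          (∑ k ∈ Finset.Icc 3 n, (Q2 k : ℝ)))
      atTop (𝓝 (u ^ 2)) := by
  rcases hu.eq_or_lt with rfl | hu
  · simp
  have hun : Tendsto (fun n : ℕ => u * (n : ℝ)) atTop atTop :=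
    tendsto_natCast_atTop_atTop.const_mul_atTop hu
  have hfloor : (fun n : ℕ => (⌊u * (n : ℝ)⌋₊ : ℝ)) ~[atTop] fun n => u * n :=
    isEquivalent_nat_floor.comp_tendsto hun
  have hscale := div_log_isEquivalent hu tendsto_natCast_atTop_atTop hfloor
  have hpos : ∀ᶠ n : ℕ in atTop, ((n : ℝ) / Real.log n) ^ 2 ≠ 0 :=
    ((tendsto_div_log_atTop.comp tendsto_natCast_atTop_atTop).eventually_ne_atTop 0).mono
      fun n hn => pow_ne_zero 2 hn
  have hnum : (fun n : ℕ => ∑ k ∈ Finset.Icc 3 ⌊u * (n : ℝ)⌋₊, (Q2 k : ℝ)) ~[atTop]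
      fun n => u ^ 2 * ((n : ℝ) / Real.log n) ^ 2 :=
    ((sum_Q2_isEquivalent.comp_tendsto (tendsto_nat_floor_atTop.comp hun)).trans
      (hscale.pow 2)).congr_right (Eventually.of_forall fun n => mul_pow _ _ _)
  have hquot := hnum.div sum_Q2_isEquivalent
  refine hquot.symm.tendsto_nhds (tendsto_const_nhds.congr' ?_)
  exact hpos.mono fun n hn => (mul_div_cancel_right₀ _ hn).symm

/-- For fixed `0 < u < 1`, `(Σ_{2<k≤un} Q₂(2k)) / (Σ_{2<k≤n} Q₂(2k)) → u²` as `n → ∞`;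
equivalently, `Gₙ/n` converges weakly to the maximum of two independent uniform-(0,1)
random variables. -/
theorem goldbach_number_weak_limit (u : ℝ) (hu0 : 0 < u) (hu1 : u < 1) :
    Tendsto (fun n : ℕ =>
        (∑ k ∈ Finset.Icc 3 ⌊u * (n : ℝ)⌋₊, (Q2 k : ℝ)) /
          (∑ k ∈ Finset.Icc 3 n, (Q2 k : ℝ)))
      atTop (𝓝 (u ^ 2)) :=
  goldbach_number_weak_limit_general u hu0.le
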